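/- The function H : ℝ → ℝ² given by H(t) = (t, −t³/3) is pseudo-convex, although its second component h₂(t) = −t³/3 is not a pseudo-convex real function. -/

import Mathlib

noncomputable section

/-- The components of the vector function `H(t) = (t, -t³/3)`. -/
def Hcomp : Fin 2 → ℝ → ℝ := ![fun t => t, fun t => -t ^ 3 / 3]

/-- A differentiable vector function `h : Fin m → ℝ → ℝ` of one real variable is
pseudo-convex if `JH(x)(y - x) ⊀ 0` implies `H(y) ⊀ H(x)`; here the Jacobian row `i`
applied to `y - x` is `deriv (h i) x * (y - x)`. -/
def PseudoConvexOnReal {m : ℕ} (h : Fin m → ℝ → ℝ) : Prop :=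
  (∀ i, Differentiable ℝ (h i)) ∧
    ∀ x y : ℝ, ¬ (∀ i, deriv (h i) x * (y - x) < 0) → ¬ (∀ i, h i y < h i x)

/-!
If one component of `H` is increasing and another is decreasing, no point strictly improves on
another in both, so `H(y) ⊀ H(x)` always holds. On the other hand, a pseudo-convex real function
attains its minimum at each of its critical points, whereas `-t³/3` is critical at `0` and
unbounded below.
-/

namespace PseudoConvexOnReal

variable {m : ℕ} {h : Fin m → ℝ → ℝ} {i j : Fin m}

theorem of_monotone_of_antitone (hd : ∀ k, Differentiable ℝ (h k)) (hi : Monotone (h i))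
    (hj : Antitone (h j)) : PseudoConvexOnReal h := by
  refine ⟨hd, fun x y _ hlt => ?_⟩
  have hyx : y < x := hi.reflect_lt (hlt i)
  exact (hj hyx.le).not_gt (hlt j)

theorem not_forall_lt_of_deriv_eq_zero (hh : PseudoConvexOnReal h) {x : ℝ}
    (hx : deriv (h i) x = 0) (y : ℝ) : ¬ ∀ k, h k y < h k x :=
  hh.2 x y fun hlt => (hlt i).ne (by rw [hx, zero_mul])

end PseudoConvexOnReal

theorem pseudoConvexOnReal_singleton_iff {f : ℝ → ℝ} :
    PseudoConvexOnReal ![f] ↔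
      Differentiable ℝ f ∧ ∀ x y : ℝ, 0 ≤ deriv f x * (y - x) → f x ≤ f y := by
  simp only [PseudoConvexOnReal, Fin.forall_fin_one, Matrix.cons_val_zero, not_lt]

theorem PseudoConvexOnReal.le_of_deriv_eq_zero {f : ℝ → ℝ} (hf : PseudoConvexOnReal ![f])
    {x : ℝ} (hx : deriv f x = 0) (y : ℝ) : f x ≤ f y := by
  simpa only [Fin.forall_fin_one, Matrix.cons_val_zero, not_lt] using
    hf.not_forall_lt_of_deriv_eq_zero (i := 0) hx y

theorem antitone_neg_pow_div_of_odd {K : Type*} [Field K] [LinearOrder K] [IsStrictOrderedRing K]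
    {n : ℕ} (hn : Odd n) {c : K} (hc : 0 ≤ c) : Antitone fun t : K => -t ^ n / c :=
  fun _ _ hst => div_le_div_of_nonneg_right (neg_le_neg (hn.pow_le_pow.2 hst)) hc

theorem deriv_neg_pow_div {𝕜 : Type*} [NontriviallyNormedField 𝕜] (n : ℕ) (c x : 𝕜) :
    deriv (fun t : 𝕜 => -t ^ n / c) x = -(n * x ^ (n - 1)) / c :=
  ((hasDerivAt_pow n x).neg.div_const c).deriv

theorem differentiable_Hcomp (i : Fin 2) : Differentiable ℝ (Hcomp i) := by
  fin_cases i
  · exact differentiable_id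
  · change Differentiable ℝ fun t : ℝ => -t ^ 3 / 3
    fun_prop

theorem pseudoConvexOnReal_Hcomp : PseudoConvexOnReal Hcomp :=
  .of_monotone_of_antitone (i := 0) (j := 1) differentiable_Hcomp monotone_id
    (antitone_neg_pow_div_of_odd (by decide) zero_le_three)

theorem not_pseudoConvexOnReal_neg_cube_div_three :
    ¬ PseudoConvexOnReal ![fun t : ℝ => -t ^ 3 / 3] := by
  intro hpc
  have hcrit : deriv (fun t : ℝ => -t ^ 3 / 3) 0 = 0 := by
    rw [deriv_neg_pow_div]
    norm_num
  have hmin : -(0 : ℝ) ^ 3 / 3 ≤ -1 ^ 3 / 3 := hpc.le_of_deriv_eq_zero hcrit 1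
  norm_num at hmin

theorem stmt_16 :
    PseudoConvexOnReal Hcomp ∧
      ¬ (Differentiable ℝ (fun t : ℝ => -t ^ 3 / 3) ∧
          ∀ x y : ℝ, 0 ≤ deriv (fun t : ℝ => -t ^ 3 / 3) x * (y - x) →
            -x ^ 3 / 3 ≤ -y ^ 3 / 3) :=
  ⟨pseudoConvexOnReal_Hcomp,
    fun hpc => not_pseudoConvexOnReal_neg_cube_div_three (pseudoConvexOnReal_singleton_iff.2 hpc)⟩
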